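/- arXiv:2503.11454 — 7 statements merged into one kernel-verified Lean document; each statement's English description precedes it below -/
import Mathlib

section
/- For every 4×4 complex matrix ρ, the twirled matrix ρ̃ = (1/4) Σ_{i=0}^{3} (σᵢ⊗σᵢ) ρ (σᵢ⊗σᵢ) is diagonal in the Bell basis; precisely, ρ̃ = Σᵢ₌₁⁴ ⟨Ψᵢ| ρ |Ψᵢ⟩ Pᵢ. In particular, if ρ is a density matrix (positive semidefinite with trace 1), then ρ̃ is a Bell diagonal state with eigenvalues θᵢ = ⟨Ψᵢ|ρ|Ψᵢ⟩. -/
open Matrix Kronecker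
open scoped ComplexOrder

/-- The four Bell states as vectors in `ℂ² ⊗ ℂ²` (indexed by `Fin 2 × Fin 2`). -/
noncomputable def bell : Fin 4 → (Fin 2 × Fin 2) → ℂ :=
  ![fun p => (if p = (0,0) then 1 else if p = (1,1) then 1 else 0) / (Real.sqrt 2 : ℂ),
    fun p => (if p = (0,0) then 1 else if p = (1,1) then -1 else 0) / (Real.sqrt 2 : ℂ),
    fun p => (if p = (0,1) then 1 else if p = (1,0) then 1 else 0) / (Real.sqrt 2 : ℂ),
    fun p => (if p = (0,1) then 1 else if p = (1,0) then -1 else 0) / (Real.sqrt 2 : ℂ)]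

/-- The rank-one projector `|Ψᵢ⟩⟨Ψᵢ|` onto the `i`-th Bell state. -/
noncomputable def bellProj (i : Fin 4) : Matrix (Fin 2 × Fin 2) (Fin 2 × Fin 2) ℂ :=
  Matrix.vecMulVec (bell i) (star (bell i))

/-- The Pauli matrices `σ₀ = I, σ₁, σ₂, σ₃`. -/
def pauli : Fin 4 → Matrix (Fin 2) (Fin 2) ℂ :=
  ![1, !![0, 1; 1, 0], !![0, -Complex.I; Complex.I, 0], !![1, 0; 0, -1]]

theorem sqrt_two_aux : ((Real.sqrt 2 : ℝ) : ℂ)⁻¹ * ((Real.sqrt 2 : ℝ) : ℂ)⁻¹ = 1/2 := by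
  rw [← mul_inv, ← Complex.ofReal_mul, Real.mul_self_sqrt (by norm_num)]
  norm_num

set_option maxHeartbeats 4000000 in
theorem twirl_aux (ρ : Matrix (Fin 2 × Fin 2) (Fin 2 × Fin 2) ℂ) :
    (1/4 : ℂ) • ∑ i : Fin 4, (pauli i ⊗ₖ pauli i) * ρ * (pauli i ⊗ₖ pauli i)
      = ∑ i : Fin 4, (star (bell i) ⬝ᵥ ρ.mulVec (bell i)) • bellProj i := by
  have hs := sqrt_two_aux
  have hI := Complex.I_mul_I
  ext ⟨a, b⟩ ⟨c, d⟩
  fin_cases a <;> fin_cases b <;> fin_cases c <;> fin_cases d <;>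
    simp [Fin.sum_univ_four, bell, bellProj, pauli, Matrix.mul_apply, Fintype.sum_prod_type,
      Fin.sum_univ_two, Matrix.vecMulVec, dotProduct, Matrix.mulVec, div_eq_mul_inv,
      Matrix.one_apply] <;>
    generalize ((Real.sqrt 2 : ℝ) : ℂ)⁻¹ = s at * <;>
    grind

theorem trace_aux (ρ : Matrix (Fin 2 × Fin 2) (Fin 2 × Fin 2) ℂ) :
    ∑ i : Fin 4, (star (bell i) ⬝ᵥ ρ.mulVec (bell i)) = ρ.trace := by
  have hs := sqrt_two_aux
  simp [Fin.sum_univ_four, bell, Fintype.sum_prod_type,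
      Fin.sum_univ_two, dotProduct, Matrix.mulVec, div_eq_mul_inv, Matrix.trace]
  generalize ((Real.sqrt 2 : ℝ) : ℂ)⁻¹ = s at *
  grind

/-- The twirl `ρ̃ = (1/4) Σᵢ (σᵢ⊗σᵢ) ρ (σᵢ⊗σᵢ)` of an arbitrary 4×4 matrix `ρ` is diagonal
in the Bell basis: `ρ̃ = Σᵢ ⟨Ψᵢ|ρ|Ψᵢ⟩ |Ψᵢ⟩⟨Ψᵢ|`.  In particular, if `ρ` is a density matrix,
then `ρ̃` is a Bell diagonal state with eigenvalues `θᵢ = ⟨Ψᵢ|ρ|Ψᵢ⟩`. -/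
theorem twirl_is_bell_diagonal (ρ : Matrix (Fin 2 × Fin 2) (Fin 2 × Fin 2) ℂ) :
    ((1/4 : ℂ) • ∑ i : Fin 4, (pauli i ⊗ₖ pauli i) * ρ * (pauli i ⊗ₖ pauli i)
      = ∑ i : Fin 4, (star (bell i) ⬝ᵥ ρ.mulVec (bell i)) • bellProj i)
    ∧ (ρ.PosSemidef → ρ.trace = 1 →
        ∃ θ : Fin 4 → ℝ, (∀ i, 0 ≤ θ i) ∧ (∑ i, θ i = 1) ∧
          (∀ i, (θ i : ℂ) = star (bell i) ⬝ᵥ ρ.mulVec (bell i)) ∧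
          (1/4 : ℂ) • ∑ i : Fin 4, (pauli i ⊗ₖ pauli i) * ρ * (pauli i ⊗ₖ pauli i)
            = ∑ i : Fin 4, (θ i : ℂ) • bellProj i) := by
  refine ⟨twirl_aux ρ, fun hρ ht => ?_⟩
  have h0 : ∀ i, 0 ≤ star (bell i) ⬝ᵥ ρ.mulVec (bell i) := fun i => hρ.dotProduct_mulVec_nonneg _
  have h1 : ∀ i, (((star (bell i) ⬝ᵥ ρ.mulVec (bell i)).re : ℝ) : ℂ)
      = star (bell i) ⬝ᵥ ρ.mulVec (bell i) := fun i =>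
    (Complex.eq_re_of_ofReal_le (h0 i)).symm
  refine ⟨fun i => (star (bell i) ⬝ᵥ ρ.mulVec (bell i)).re,
    fun i => (Complex.le_def.1 (h0 i)).1, ?_, h1, ?_⟩
  · rw [← Complex.re_sum, trace_aux, ht, Complex.one_re]
  · simp only [h1]
    exact twirl_aux ρ
end

section
/- Fix N ≥ 1 and θ ∈ ℝ⁴ with θᵢ ≥ 0 and Σθᵢ = 1. Let X = (X₁,X₂,X₃,X₄) follow the multinomial distribution with parameters N and θ. Then the risk of the Bayesian mean estimator (under a uniform prior on the simplex) θ̂ᵢ = (Xᵢ+1)/(N+4) satisfies Σᵢ₌₁⁴ E[((Xᵢ+1)/(N+4) − θᵢ)²] = [N(1 − Σᵢθᵢ²) + 4(4Σᵢθᵢ² − 1)] / (N+4)². -/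
open Polynomial in
theorem aux_gen (N : ℕ) (θ : Fin 4 → ℝ) (hsum : ∑ i, θ i = 1) (i : Fin 4) :
    ∑ x ∈ Finset.Nat.antidiagonalTuple 4 N,
      C ((Nat.multinomial Finset.univ x : ℝ) * ∏ j, θ j ^ x j) * (X : ℝ[X]) ^ (x i)
      = (C (1 - θ i) + C (θ i) * X) ^ N := by
  have h1 : (C (1 - θ i) + C (θ i) * X : ℝ[X])
      = ∑ j, C (θ j) * (if j = i then X else 1) := by
    rw [← hsum]
    fin_cases i <;> simp [Fin.sum_univ_four] <;> ring
  have h2 : Finset.Nat.antidiagonalTuple 4 N = Finset.piAntidiag Finset.univ N := by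
    ext x
    simp [Finset.Nat.mem_antidiagonalTuple]
  rw [h1, Finset.sum_pow_eq_sum_piAntidiag, h2]
  refine Finset.sum_congr rfl fun x _ => ?_
  simp only [mul_pow, Finset.prod_mul_distrib, ite_pow, one_pow, Finset.prod_ite_eq',
    Finset.mem_univ, if_true, map_mul, map_prod, map_pow, map_natCast]
  ring

open Polynomial in
theorem risk_bayes_mean_bell_state_measurements
    (N : ℕ) (hN : 1 ≤ N) (θ : Fin 4 → ℝ) (hθ : ∀ i, 0 ≤ θ i)
    (hsum : ∑ i, θ i = 1) :
    ∑ i : Fin 4, ∑ x ∈ Finset.Nat.antidiagonalTuple 4 N,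
        ((Nat.multinomial Finset.univ x : ℝ) * ∏ j, θ j ^ x j) *
          (((x i : ℝ) + 1) / ((N : ℝ) + 4) - θ i) ^ 2
      = ((N : ℝ) * (1 - ∑ i, θ i ^ 2) + 4 * (4 * (∑ i, θ i ^ 2) - 1)) / ((N : ℝ) + 4) ^ 2 := by
  have hN4 : (N : ℝ) + 4 ≠ 0 := by positivity
  have key : ∀ i : Fin 4, ∑ x ∈ Finset.Nat.antidiagonalTuple 4 N,
        ((Nat.multinomial Finset.univ x : ℝ) * ∏ j, θ j ^ x j) *
          (((x i : ℝ) + 1) / ((N : ℝ) + 4) - θ i) ^ 2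
      = (N * (θ i * (1 - θ i)) + (1 - 4 * θ i) ^ 2) / ((N : ℝ) + 4) ^ 2 := by
    intro i
    have g := aux_gen N θ hsum i
    generalize hw : (fun x : Fin 4 → ℕ =>
      (Nat.multinomial Finset.univ x : ℝ) * ∏ j, θ j ^ x j) = w
    have hw' : ∀ x : Fin 4 → ℕ,
      (Nat.multinomial Finset.univ x : ℝ) * ∏ j, θ j ^ x j = w x := fun x => by rw [← hw]
    simp only [hw'] at g ⊢
    have e0 := congrArg (eval 1) g
    have e1 := congrArg (fun p => eval 1 (derivative p)) g
    have e2 := congrArg (fun p => eval 1 (derivative (derivative p))) g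
    simp [eval_finset_sum, derivative_pow] at e0 e1 e2
    have e2' : ∑ x ∈ Finset.Nat.antidiagonalTuple 4 N, w x * ((x i : ℝ) * ((x i : ℝ) - 1))
        = N * (N - 1) * θ i ^ 2 := by
      have c : ∀ n : ℕ, (n : ℝ) * ((n - 1 : ℕ) : ℝ) = n * ((n : ℝ) - 1) := by
        intro n; cases n <;> simp
      simp only [c] at e2
      rw [e2, ← c N]; ring
    have : ∀ x : Fin 4 → ℕ, w x * (((x i : ℝ) + 1) / ((N : ℝ) + 4) - θ i) ^ 2
        = (w x * ((x i : ℝ) * ((x i : ℝ) - 1)) + (3 - 2 * (N + 4) * θ i) * (w x * x i)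
          + (1 - (N + 4) * θ i) ^ 2 * w x) / ((N : ℝ) + 4) ^ 2 := by
      intro x; field_simp; ring
    simp only [this]
    rw [← Finset.sum_div, Finset.sum_add_distrib, Finset.sum_add_distrib, ← Finset.mul_sum,
      ← Finset.mul_sum, e0, e1, e2']
    congr 1; ring
  simp only [key]
  rw [← Finset.sum_div]
  congr 1
  simp only [Fin.sum_univ_four] at *
  linear_combination ((N : ℝ) - 8) * hsum
end

section
/- Fix N ≥ 1. The average over the uniform prior on the probability simplex Δ = {θ ∈ ℝ⁴ : θᵢ ≥ 0, Σθᵢ = 1} of the quantity [N(1 − Σᵢθᵢ²) + 4(4Σᵢθᵢ² − 1)]/(N+4)² (the Hilbert–Schmidt risk of the Bayesian mean estimator from N Bell state measurements) equals 3/(5(N+4)). -/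
open MeasureTheory

lemma aux_int (F f : ℝ → ℝ) (r : ℝ) (hr : 0 ≤ r) (hF : ∀ x, HasDerivAt F (f x) x)
    (hf : Continuous f) (g : ℝ → ℝ) (hg : ∀ x, g x = (Set.Icc 0 r).indicator f x) :
    ∫ x, g x = F r - F 0 := by
  have : g = (Set.Icc 0 r).indicator f := funext hg
  rw [this, integral_indicator measurableSet_Icc, integral_Icc_eq_integral_Ioc,
    ← intervalIntegral.integral_of_le hr]
  exact intervalIntegral.integral_eq_sub_of_hasDerivAt (fun x _ => hF x)
    (hf.intervalIntegrable _ _)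

lemma aux_pow (c : ℝ) (n : ℕ) (x : ℝ) :
    HasDerivAt (fun x : ℝ => c * x ^ (n + 1)) (c * ((n + 1 : ℕ) * x ^ n)) x := by
  simpa using (hasDerivAt_pow (n + 1) x).const_mul c

lemma aux_poly (c0 c1 c2 c3 c4 : ℝ) (f : ℝ → ℝ)
    (h : ∀ x, f x = c0 + c1 * x + c2 * x ^ 2 + c3 * x ^ 3 + c4 * x ^ 4) (r : ℝ) (hr : 0 ≤ r)
    (g : ℝ → ℝ) (hg : ∀ x, g x = if 0 ≤ x ∧ x ≤ r then f x else 0) :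
    ∫ x, g x = c0 * r + c1 / 2 * r ^ 2 + c2 / 3 * r ^ 3 + c3 / 4 * r ^ 4 + c4 / 5 * r ^ 5 := by
  have hf : f = fun x => c0 + c1 * x + c2 * x ^ 2 + c3 * x ^ 3 + c4 * x ^ 4 := funext h
  rw [aux_int (fun x => c0 * x ^ (0 + 1) + c1 / 2 * x ^ (1 + 1) + c2 / 3 * x ^ (2 + 1)
      + c3 / 4 * x ^ (3 + 1) + c4 / 5 * x ^ (4 + 1)) f r hr ?_ ?_ g ?_]
  · ring
  · intro x
    have hd := ((((aux_pow c0 0 x).add (aux_pow (c1 / 2) 1 x)).add (aux_pow (c2 / 3) 2 x)).add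
      (aux_pow (c3 / 4) 3 x)).add (aux_pow (c4 / 5) 4 x)
    refine hd.congr_deriv ?_
    rw [h]; push_cast; ring
  · rw [hf]; fun_prop
  · intro x; rw [hg]; simp [Set.indicator, Set.mem_Icc]

lemma aux_two (f : (Fin 2 → ℝ) → ℝ) (hf : Integrable f) :
    ∫ y, f y = ∫ b, ∫ c, f ![b, c] := by
  have hm := (volume_preserving_finTwoArrow ℝ).symm
  rw [← hm.integral_comp' f]
  have hi : Integrable (fun p : ℝ × ℝ => f (MeasurableEquiv.finTwoArrow.symm p)) volume :=
    (hm.integrable_comp_emb (MeasurableEquiv.measurableEmbedding _)).2 hf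
  rw [Measure.volume_eq_prod] at hi ⊢
  rw [integral_prod _ hi]
  rfl

lemma aux_three (f : (Fin 3 → ℝ) → ℝ) (hf : Integrable f)
    (hf2 : ∀ a, Integrable (fun z : Fin 2 → ℝ => f (Fin.cons a z))) :
    ∫ y, f y = ∫ a, ∫ b, ∫ c, f ![a, b, c] := by
  have hm := (volume_preserving_piFinSuccAbove (fun _ : Fin 3 => ℝ) 0).symm
  rw [← hm.integral_comp' f]
  have hi : Integrable (fun p : ℝ × (Fin 2 → ℝ) =>
      f ((MeasurableEquiv.piFinSuccAbove (fun _ : Fin 3 => ℝ) 0).symm p)) volume :=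
    (hm.integrable_comp_emb (MeasurableEquiv.measurableEmbedding _)).2 hf
  rw [Measure.volume_eq_prod] at hi ⊢
  have h2 := integral_prod _ hi
  refine h2.trans ?_
  congr 1
  funext a
  have h3 := aux_two _ (hf2 a)
  refine Eq.trans ?_ h3
  congr 1
  funext z
  simp [MeasurableEquiv.piFinSuccAbove, Fin.insertNthEquiv]

lemma aux_intble {n : ℕ} (S : Set (Fin n → ℝ)) (hS : IsClosed S)
    (hb : S ⊆ Set.Icc 0 1) (f : (Fin n → ℝ) → ℝ) (hf : Continuous f) :
    Integrable (S.indicator f) := by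
  have hc : IsCompact S := isCompact_Icc.of_isClosed_subset hS hb
  exact (integrable_indicator_iff hS.measurableSet).2 (hf.continuousOn.integrableOn_compact hc)

lemma aux_main (A B : ℝ) :
    ∫ y in {y : Fin 3 → ℝ | (∀ i, 0 ≤ y i) ∧ y 0 + y 1 + y 2 ≤ 1},
      (A + B * (y 0 ^ 2 + y 1 ^ 2 + y 2 ^ 2 + (1 - y 0 - y 1 - y 2) ^ 2)) = A / 6 + B / 15 := by
  set S := {y : Fin 3 → ℝ | (∀ i, 0 ≤ y i) ∧ y 0 + y 1 + y 2 ≤ 1} with hSdef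
  have hS : IsClosed S := by
    have h1 : IsClosed {y : Fin 3 → ℝ | ∀ i, 0 ≤ y i} := by
      simp only [Set.setOf_forall]
      exact isClosed_iInter fun i => isClosed_le (by fun_prop) (by fun_prop)
    have h2 : IsClosed {y : Fin 3 → ℝ | y 0 + y 1 + y 2 ≤ 1} :=
      isClosed_le (by fun_prop) (by fun_prop)
    exact h1.inter h2
  have hb : S ⊆ Set.Icc 0 1 := by
    rintro y ⟨h0, h1⟩
    have := h0 0
    have := h0 1
    have := h0 2
    refine ⟨h0, fun i => ?_⟩
    fin_cases i <;> simp <;> linarith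
  rw [← integral_indicator hS.measurableSet]
  rw [aux_three _ (aux_intble S hS hb _ (by fun_prop))]
  · have e1 : ∀ a b : ℝ, ∫ c, S.indicator (fun y : Fin 3 → ℝ =>
        A + B * (y 0 ^ 2 + y 1 ^ 2 + y 2 ^ 2 + (1 - y 0 - y 1 - y 2) ^ 2)) ![a, b, c]
        = if 0 ≤ a ∧ 0 ≤ b ∧ a + b ≤ 1 then
          A * (1 - a - b) + B * ((a ^ 2 + b ^ 2) * (1 - a - b) + 2 / 3 * (1 - a - b) ^ 3)
          else 0 := by
      intro a b
      split_ifs with h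
      · rw [aux_poly (A + B * (a ^ 2 + b ^ 2 + (1 - a - b) ^ 2)) (-2 * B * (1 - a - b)) (2 * B) 0 0
          (fun c => A + B * (a ^ 2 + b ^ 2 + c ^ 2 + (1 - a - b - c) ^ 2)) (fun x => by ring)
          (1 - a - b) (by linarith)]
        · ring
        · intro c
          have : (![a, b, c] ∈ S) ↔ (0 ≤ c ∧ c ≤ 1 - a - b) := by
            simp only [hSdef, Set.mem_setOf_eq, Fin.forall_fin_succ]
            simp
            constructor
            · rintro ⟨⟨_, _, h1⟩, h2⟩
              exact ⟨h1, by linarith⟩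
            · rintro ⟨h1, h2⟩
              exact ⟨⟨h.1, h.2.1, h1⟩, by linarith⟩
          simp only [Set.indicator, this]
          simp
      · refine integral_eq_zero_of_ae (Filter.Eventually.of_forall fun c => ?_)
        apply Set.indicator_of_notMem
        intro hc
        apply h
        have h0 := hc.1 0
        have h1 := hc.1 1
        have h2 := hc.1 2
        have h3 := hc.2
        simp at h0 h1 h2 h3
        exact ⟨h0, h1, by linarith⟩
    have e2 : ∀ a : ℝ, (∫ b : ℝ, if 0 ≤ a ∧ 0 ≤ b ∧ a + b ≤ 1 then
          A * (1 - a - b) + B * ((a ^ 2 + b ^ 2) * (1 - a - b) + 2 / 3 * (1 - a - b) ^ 3)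
          else 0) = if 0 ≤ a ∧ a ≤ 1 then
            A / 2 * (1 - a) ^ 2 + B * (a ^ 2 * (1 - a) ^ 2 / 2 + (1 - a) ^ 4 / 4) else 0 := by
      intro a
      split_ifs with h
      · rw [aux_poly (A * (1 - a) + B * (a ^ 2 * (1 - a) + 2 / 3 * (1 - a) ^ 3))
          (-A + B * (-a ^ 2 - 2 * (1 - a) ^ 2)) (B * (1 - a + 2 * (1 - a))) (B * (-1 - 2 / 3)) 0
          (fun b => A * (1 - a - b) + B * ((a ^ 2 + b ^ 2) * (1 - a - b)
            + 2 / 3 * (1 - a - b) ^ 3)) (fun x => by ring)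
          (1 - a) (by linarith)]
        · ring
        · intro b
          have : (0 ≤ a ∧ 0 ≤ b ∧ a + b ≤ 1) ↔ (0 ≤ b ∧ b ≤ 1 - a) :=
            ⟨fun k => ⟨k.2.1, by linarith [k.2.2]⟩, fun k => ⟨h.1, k.1, by linarith [k.2]⟩⟩
          simp only [this]
      · refine integral_eq_zero_of_ae (Filter.Eventually.of_forall fun c => ?_)
        apply if_neg
        rintro ⟨h0, h1, h2⟩
        exact h ⟨h0, by linarith⟩
    simp only [e1, e2]
    rw [aux_poly (A / 2 + B / 4) (-A - B) (A / 2 + 2 * B) (-2 * B) (3 / 4 * B)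
      (fun a => A / 2 * (1 - a) ^ 2 + B * (a ^ 2 * (1 - a) ^ 2 / 2 + (1 - a) ^ 4 / 4))
      (fun x => by ring) 1 (by norm_num) _ (fun x => rfl)]
    ring
  · intro a
    have hcont : Continuous (fun z : Fin 2 → ℝ => (Fin.cons a z : Fin 3 → ℝ)) := by
      refine continuous_pi fun i => ?_
      refine Fin.cases ?_ (fun j => ?_) i
      · simpa using continuous_const
      · simpa using continuous_apply j
    have := aux_intble ((fun z : Fin 2 → ℝ => (Fin.cons a z : Fin 3 → ℝ)) ⁻¹' S)
      (hS.preimage hcont) (fun z hz => by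
        have := hb hz
        exact ⟨fun i => by simpa using this.1 i.succ, fun i => by simpa using this.2 i.succ⟩)
      (fun z => (fun y : Fin 3 → ℝ =>
        A + B * (y 0 ^ 2 + y 1 ^ 2 + y 2 ^ 2 + (1 - y 0 - y 1 - y 2) ^ 2)) (Fin.cons a z))
      (Continuous.comp (g := fun y : Fin 3 → ℝ =>
        A + B * (y 0 ^ 2 + y 1 ^ 2 + y 2 ^ 2 + (1 - y 0 - y 1 - y 2) ^ 2)) (by fun_prop) hcont)
    exact this



/-- The average over the uniform prior on the probability simplex
(realized by `θ₄ = 1−θ₁−θ₂−θ₃` with density `6` on `{θᵢ ≥ 0, θ₁+θ₂+θ₃ ≤ 1}`)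
of the Hilbert–Schmidt risk `[N(1 − Σᵢθᵢ²) + 4(4Σᵢθᵢ² − 1)]/(N+4)²` of the
Bayesian mean estimator from `N` Bell state measurements equals `3/(5(N+4))`. -/
theorem avg_risk_bayes_mean_bell_state_measurements (N : ℕ) (hN : 1 ≤ N) :
    ∫ y in {y : Fin 3 → ℝ | (∀ i, 0 ≤ y i) ∧ y 0 + y 1 + y 2 ≤ 1},
        6 * (((N : ℝ) * (1 - (y 0 ^ 2 + y 1 ^ 2 + y 2 ^ 2 + (1 - y 0 - y 1 - y 2) ^ 2))
              + 4 * (4 * (y 0 ^ 2 + y 1 ^ 2 + y 2 ^ 2 + (1 - y 0 - y 1 - y 2) ^ 2) - 1))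
            / ((N : ℝ) + 4) ^ 2)
      = 3 / (5 * ((N : ℝ) + 4)) := by
  have h4 : (N : ℝ) + 4 ≠ 0 := by positivity
  have h := aux_main (6 * ((N : ℝ) - 4) / ((N : ℝ) + 4) ^ 2) (6 * (16 - (N : ℝ)) / ((N : ℝ) + 4) ^ 2)
  have e : 3 / (5 * ((N : ℝ) + 4)) = (6 * ((N : ℝ) - 4) / ((N : ℝ) + 4) ^ 2) / 6
      + (6 * (16 - (N : ℝ)) / ((N : ℝ) + 4) ^ 2) / 15 := by
    field_simp
    ring
  rw [e, ← h]
  congr 1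
  funext y
  ring
end

section
/- Let p, q ∈ ℝ³ with |p| = |q| = 1, and let P = (1/2)(I₂ + Σᵢ pᵢσᵢ), Q = (1/2)(I₂ + Σᵢ qᵢσᵢ). Let θ ∈ ℝ⁴ with θᵢ ≥ 0 and Σθᵢ = 1, and let ρ(θ) = Σᵢ θᵢ Pᵢ be the corresponding Bell diagonal state. Then the (real) number Tr[(P⊗Q) ρ(θ)] is at most 1/2. -/
open Matrix Kronecker

/-- The three Pauli matrices `σ₁, σ₂, σ₃`. -/
def pauliσ : Fin 3 → Matrix (Fin 2) (Fin 2) ℂ :=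
  ![!![0, 1; 1, 0], !![0, -Complex.I; Complex.I, 0], !![1, 0; 0, -1]]

lemma tr_aux (p q : Fin 3 → ℝ) (θ : Fin 4 → ℝ) :
    ((((1/2 : ℂ) • ((1 : Matrix (Fin 2) (Fin 2) ℂ) + ∑ i : Fin 3, (p i : ℂ) • pauliσ i))
        ⊗ₖ ((1/2 : ℂ) • ((1 : Matrix (Fin 2) (Fin 2) ℂ) + ∑ i : Fin 3, (q i : ℂ) • pauliσ i)))
      * (∑ i : Fin 4, (θ i : ℂ) • bellProj i)).trace =
    (((θ 0 * (1 + p 0 * q 0 - p 1 * q 1 + p 2 * q 2)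
      + θ 1 * (1 - p 0 * q 0 + p 1 * q 1 + p 2 * q 2)
      + θ 2 * (1 + p 0 * q 0 + p 1 * q 1 - p 2 * q 2)
      + θ 3 * (1 - p 0 * q 0 - p 1 * q 1 - p 2 * q 2)) / 4 : ℝ) : ℂ) := by
  have h2 : ((Real.sqrt 2 : ℝ) : ℂ)⁻¹ ^ 2 = 1 / 2 := by
    rw [inv_pow, ← Complex.ofReal_pow, Real.sq_sqrt (by norm_num)]; norm_num
  have hI := Complex.I_sq
  simp [Matrix.trace, Matrix.mul_apply, Fintype.sum_prod_type, Fin.sum_univ_succ, bellProj, bell,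
    pauliσ, Matrix.vecMulVec_apply, Matrix.add_apply, Matrix.sum_apply, div_eq_mul_inv]
  generalize ((Real.sqrt 2 : ℝ) : ℂ)⁻¹ = s at *
  generalize Complex.I = I at *
  grind

lemma cs_aux (a b c x y z : ℝ) (h1 : a ^ 2 + b ^ 2 + c ^ 2 = 1)
    (h2 : x ^ 2 + y ^ 2 + z ^ 2 = 1) : 
    1 + a * x - b * y + c * z ≤ 2 ∧ 1 - a * x + b * y + c * z ≤ 2 ∧
    1 + a * x + b * y - c * z ≤ 2 ∧ 1 - a * x - b * y - c * z ≤ 2 := by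
  refine ⟨?_, ?_, ?_, ?_⟩
  · nlinarith [sq_nonneg (a - x), sq_nonneg (b + y), sq_nonneg (c - z)]
  · nlinarith [sq_nonneg (a + x), sq_nonneg (b - y), sq_nonneg (c - z)]
  · nlinarith [sq_nonneg (a - x), sq_nonneg (b - y), sq_nonneg (c + z)]
  · nlinarith [sq_nonneg (a + x), sq_nonneg (b + y), sq_nonneg (c + z)]

/-- For rank-one projectors `P, Q` with unit Bloch vectors `p, q` and a Bell diagonal
state `ρ(θ)`, the number `Tr[(P⊗Q)ρ(θ)]` is real and at most `1/2`. -/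
theorem trace_separable_on_bell_diagonal_le_half
    (p q : Fin 3 → ℝ) (hp : p 0 ^ 2 + p 1 ^ 2 + p 2 ^ 2 = 1)
    (hq : q 0 ^ 2 + q 1 ^ 2 + q 2 ^ 2 = 1)
    (θ : Fin 4 → ℝ) (hθ : ∀ i, 0 ≤ θ i) (hsum : ∑ i, θ i = 1) :
    (((((1/2 : ℂ) • ((1 : Matrix (Fin 2) (Fin 2) ℂ) + ∑ i : Fin 3, (p i : ℂ) • pauliσ i))
        ⊗ₖ ((1/2 : ℂ) • ((1 : Matrix (Fin 2) (Fin 2) ℂ) + ∑ i : Fin 3, (q i : ℂ) • pauliσ i)))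
      * (∑ i : Fin 4, (θ i : ℂ) • bellProj i)).trace.im = 0)
    ∧ (((((1/2 : ℂ) • ((1 : Matrix (Fin 2) (Fin 2) ℂ) + ∑ i : Fin 3, (p i : ℂ) • pauliσ i))
        ⊗ₖ ((1/2 : ℂ) • ((1 : Matrix (Fin 2) (Fin 2) ℂ) + ∑ i : Fin 3, (q i : ℂ) • pauliσ i)))
      * (∑ i : Fin 4, (θ i : ℂ) • bellProj i)).trace.re ≤ 1/2) := by
  rw [tr_aux]
  refine ⟨Complex.ofReal_im _, ?_⟩
  rw [Complex.ofReal_re]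
  obtain ⟨h0, h1, h2, h3⟩ := cs_aux _ _ _ _ _ _ hp hq
  have e : θ 0 + θ 1 + θ 2 + θ 3 = 1 := by rw [← hsum, Fin.sum_univ_four]
  have g0 := mul_le_mul_of_nonneg_left h0 (hθ 0)
  have g1 := mul_le_mul_of_nonneg_left h1 (hθ 1)
  have g2 := mul_le_mul_of_nonneg_left h2 (hθ 2)
  have g3 := mul_le_mul_of_nonneg_left h3 (hθ 3)
  linarith
end

section
/- Let p, q ∈ ℝ³ with |p| = |q| = 1, and let t⁽¹⁾ = (1,−1,1), t⁽²⁾ = (−1,1,1), t⁽³⁾ = (1,1,−1), t⁽⁴⁾ = (−1,−1,−1) be the Pauli parameter vectors of the four Bell states. Then the separable measurement outcome probabilities (1/4)(1 + Σⱼ pⱼqⱼ t⁽ⁱ⁾ⱼ) take only the extreme values 0 or 1/2 on all four Bell states — i.e., Σⱼ pⱼqⱼ t⁽ⁱ⁾ⱼ ∈ {−1, 1} for every i ∈ {1,2,3,4} — if and only if there exist k ∈ {1,2,3} and signs ε, δ ∈ {−1,1} such that p = ε e_k and q = δ e_k, where e_k is the k-th standard basis vector of ℝ³. -/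
/-- The Pauli parameter vectors of the four Bell states:
`t⁽¹⁾ = (1,−1,1)`, `t⁽²⁾ = (−1,1,1)`, `t⁽³⁾ = (1,1,−1)`, `t⁽⁴⁾ = (−1,−1,−1)`. -/
def bellPauliParams : Fin 4 → Fin 3 → ℝ :=
  ![![1, -1, 1], ![-1, 1, 1], ![1, 1, -1], ![-1, -1, -1]]

theorem bell_aux (a b c d e f : ℝ) (h1 : a ^ 2 + b ^ 2 + c ^ 2 = 1)
    (h2 : d ^ 2 + e ^ 2 + f ^ 2 = 1) (h : a * d = 1 ∨ a * d = -1) :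
    (a = 1 ∨ a = -1) ∧ (d = 1 ∨ d = -1) ∧ b = 0 ∧ c = 0 ∧ e = 0 ∧ f = 0 := by
  have hs : a ^ 2 * d ^ 2 = 1 := by
    rw [← mul_pow]
    rcases h with h | h <;> rw [h] <;> norm_num
  have ha : a ^ 2 = 1 := by
    nlinarith [sq_nonneg a, sq_nonneg b, sq_nonneg c, sq_nonneg d, sq_nonneg e, sq_nonneg f,
      mul_nonneg (sq_nonneg a) (add_nonneg (sq_nonneg e) (sq_nonneg f))]
  have hd : d ^ 2 = 1 := by rw [ha] at hs; linarith
  refine ⟨by simpa using ha, by simpa using hd, ?_, ?_, ?_, ?_⟩ <;>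
    refine pow_eq_zero_iff (two_ne_zero) |>.1 ?_ <;>
    linarith [sq_nonneg b, sq_nonneg c, sq_nonneg e, sq_nonneg f]

/-- For unit vectors `p, q ∈ ℝ³`, the separable outcome probabilities
`(1/4)(1 + Σⱼ pⱼqⱼ t⁽ⁱ⁾ⱼ)` take only the extreme values `0` or `1/2` on all four
Bell states (i.e. `Σⱼ pⱼqⱼ t⁽ⁱ⁾ⱼ ∈ {−1,1}` for all `i`) iff `p = ±e_k` and `q = ±e_k`
for some standard basis vector `e_k`, i.e. both qubits are measured in the same
Pauli basis. -/
theorem extreme_probabilities_iff_same_pauli_basis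
    (p q : Fin 3 → ℝ) (hp : p 0 ^ 2 + p 1 ^ 2 + p 2 ^ 2 = 1)
    (hq : q 0 ^ 2 + q 1 ^ 2 + q 2 ^ 2 = 1) :
    (∀ i : Fin 4, (∑ j, p j * q j * bellPauliParams i j) = -1 ∨
                  (∑ j, p j * q j * bellPauliParams i j) = 1)
    ↔ ∃ (k : Fin 3) (ε δ : ℝ), (ε = 1 ∨ ε = -1) ∧ (δ = 1 ∨ δ = -1) ∧
        p = (fun j => if j = k then ε else 0) ∧
        q = (fun j => if j = k then δ else 0) := by
  constructor
  · intro h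
    have h0 := h 0
    have h1 := h 1
    have h2 := h 2
    have h3 := h 3
    simp [Fin.sum_univ_three, bellPauliParams] at h0 h1 h2 h3
    have key : (p 0 * q 0 = 1 ∨ p 0 * q 0 = -1) ∨ (p 1 * q 1 = 1 ∨ p 1 * q 1 = -1) ∨
        (p 2 * q 2 = 1 ∨ p 2 * q 2 = -1) := by
      generalize p 0 * q 0 = x at *
      generalize p 1 * q 1 = y at *
      generalize p 2 * q 2 = z at *
      grind
    rcases key with k | k | k
    · obtain ⟨a, d, hb, hc, he, hf⟩ := bell_aux _ _ _ _ _ _ hp hq k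
      refine ⟨0, p 0, q 0, a, d, ?_, ?_⟩ <;> funext j <;> fin_cases j <;> simp [*]
    · obtain ⟨a, d, hb, hc, he, hf⟩ := bell_aux (p 1) (p 0) (p 2) (q 1) (q 0) (q 2)
        (by linarith) (by linarith) k
      refine ⟨1, p 1, q 1, a, d, ?_, ?_⟩ <;> funext j <;> fin_cases j <;> simp [*]
    · obtain ⟨a, d, hb, hc, he, hf⟩ := bell_aux (p 2) (p 0) (p 1) (q 2) (q 0) (q 1)
        (by linarith) (by linarith) k
      refine ⟨2, p 2, q 2, a, d, ?_, ?_⟩ <;> funext j <;> fin_cases j <;> simp [*]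
  · rintro ⟨k, ε, δ, hε, hδ, rfl, rfl⟩ i
    clear hp hq
    rcases hε with rfl | rfl <;> rcases hδ with rfl | rfl <;> fin_cases k <;> fin_cases i <;>
      simp [Fin.sum_univ_three, bellPauliParams]
end

section
/- Fix N ≥ 1 and θ ∈ ℝ⁴ with θᵢ ≥ 0 and Σθᵢ = 1, with Pauli parameters t₁ = θ₁−θ₂+θ₃−θ₄, t₂ = −θ₁+θ₂+θ₃−θ₄, t₃ = θ₁+θ₂−θ₃−θ₄. Consider N i.i.d. random Pauli parity checks: each draw takes a value (i,j) ∈ {1,2,3}×{0,1} with probability (1 + (−1)^j tᵢ)/6. Let X_{i,j} be the number of outcomes (i,j) and Yᵢ = X_{i,0}+X_{i,1}, and define the direct inversion estimator t̂ᵢ = 0 if Yᵢ = 0 and t̂ᵢ = 2X_{i,0}/Yᵢ − 1 otherwise. Then the Hilbert–Schmidt risk R = (1/4) Σᵢ₌₁³ E[(t̂ᵢ − tᵢ)²] equals (2/3)^N { (1 − Σᵢ₌₁⁴ θᵢ²) [ (N/2) g(N) − 1 ] + 3/4 }, where g(N) = Σ_{k=0}^{N−1} C(N−1,k) 2^{−k}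 (k+1)^{−2} (which equals the generalized hypergeometric value ₃F₂(1,1,1−N;2,2;−1/2)). -/
noncomputable def wt (t : Fin 3 → ℝ) (a : Fin 3 × Fin 2) : ℝ :=
  (1 + (-1 : ℝ) ^ ((a.2 : ℕ)) * t a.1) / 6

noncomputable def EE (t : Fin 3 → ℝ) (i : Fin 3) (N : ℕ) (F : ℕ → ℕ → ℝ) : ℝ :=
  ∑ ω : Fin N → Fin 3 × Fin 2, (∏ n, wt t (ω n)) *
    F (Finset.univ.filter fun n => ω n = (i, 0)).card
      (Finset.univ.filter fun n => (ω n).1 = i).card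

lemma EE_zero (t : Fin 3 → ℝ) (i : Fin 3) (F : ℕ → ℕ → ℝ) : EE t i 0 F = F 0 0 := by
  simp [EE]

lemma EE_add (t : Fin 3 → ℝ) (i : Fin 3) (N : ℕ) (F G : ℕ → ℕ → ℝ) :
    EE t i N (fun x y => F x y + G x y) = EE t i N F + EE t i N G := by
  simp [EE, mul_add, Finset.sum_add_distrib]

lemma EE_smul (t : Fin 3 → ℝ) (i : Fin 3) (N : ℕ) (c : ℝ) (F : ℕ → ℕ → ℝ) :
    EE t i N (fun x y => c * F x y) = c * EE t i N F := by
  simp only [EE, Finset.mul_sum]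
  exact Finset.sum_congr rfl fun _ _ => by ring

lemma EE_cons (t : Fin 3 → ℝ) (i : Fin 3) (N : ℕ) (F : ℕ → ℕ → ℝ) :
    EE t i (N + 1) F = ∑ a : Fin 3 × Fin 2, wt t a *
      EE t i N (fun x y => F (x + if a = (i, 0) then 1 else 0) (y + if a.1 = i then 1 else 0)) := by
  unfold EE
  rw [← (Fin.consEquiv (fun _ : Fin (N + 1) => Fin 3 × Fin 2)).sum_comp, Fintype.sum_prod_type]
  refine Finset.sum_congr rfl fun a _ => ?_
  rw [Finset.mul_sum]
  refine Finset.sum_congr rfl fun ω _ => ?_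
  rw [Fin.prod_univ_succ, Fin.card_filter_univ_succ', Fin.card_filter_univ_succ', mul_assoc,
    add_comm (ite _ 1 0), add_comm (ite _ 1 0)]
  rfl

lemma EE_succ (t : Fin 3 → ℝ) (i : Fin 3) (N : ℕ) (F : ℕ → ℕ → ℝ) :
    EE t i (N + 1) F = 2 / 3 * EE t i N F
      + (1 + t i) / 6 * EE t i N (fun x y => F (x + 1) (y + 1))
      + (1 - t i) / 6 * EE t i N (fun x y => F x (y + 1)) := by
  rw [EE_cons, Fintype.sum_prod_type]
  fin_cases i <;> simp [Fin.sum_univ_three, Fin.sum_univ_two, wt] <;> ring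

lemma EE_bin (t : Fin 3 → ℝ) (i : Fin 3) (N : ℕ) : ∀ (h : ℕ → ℝ),
    EE t i N (fun _ y => h y) =
      ∑ k ∈ Finset.range (N + 1), (N.choose k : ℝ) * ((1 / 3) ^ k * (2 / 3) ^ (N - k) * h k) := by
  induction N with
  | zero => intro h; simp [EE_zero]
  | succ N ih =>
    intro h
    rw [EE_succ, ih, ih (fun y => h (y + 1)),
      Finset.sum_choose_succ_mul (fun k m => (1 / 3 : ℝ) ^ k * (2 / 3) ^ m * h k) N]
    have e1 : ∑ k ∈ Finset.range (N + 1), (N.choose k : ℝ) *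
        ((1 / 3) ^ k * (2 / 3) ^ (N + 1 - k) * h k) = 2 / 3 * ∑ k ∈ Finset.range (N + 1),
        (N.choose k : ℝ) * ((1 / 3) ^ k * (2 / 3) ^ (N - k) * h k) := by
      rw [Finset.mul_sum]
      refine Finset.sum_congr rfl fun k hk => ?_
      rw [Nat.succ_sub (Nat.lt_succ_iff.mp (Finset.mem_range.mp hk)), pow_succ]
      ring
    have e2 : ∑ k ∈ Finset.range (N + 1), (N.choose k : ℝ) *
        ((1 / 3) ^ (k + 1) * (2 / 3) ^ (N - k) * h (k + 1)) = 1 / 3 * ∑ k ∈ Finset.range (N + 1),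
        (N.choose k : ℝ) * ((1 / 3) ^ k * (2 / 3) ^ (N - k) * h (k + 1)) := by
      rw [Finset.mul_sum]
      refine Finset.sum_congr rfl fun k hk => ?_
      rw [pow_succ]
      ring
    rw [e1, e2]
    ring

lemma EE_var (t : Fin 3 → ℝ) (i : Fin 3) (N : ℕ) : ∀ (h : ℕ → ℝ),
    EE t i N (fun x y => h y * (x - (1 + t i) / 2 * y) ^ 2) =
      (1 + t i) / 2 * ((1 - t i) / 2) * EE t i N (fun _ y => h y * y) := by
  induction N with
  | zero => intro h; simp [EE_zero]
  | succ N ih =>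
    intro h
    rw [EE_succ, EE_succ t i N (fun _ y => h y * y), ih]
    have key : (1 + t i) / 6 * EE t i N (fun x y => h (y + 1) *
          (((x + 1 : ℕ) : ℝ) - (1 + t i) / 2 * ((y + 1 : ℕ) : ℝ)) ^ 2)
        + (1 - t i) / 6 * EE t i N (fun x y => h (y + 1) *
          ((x : ℝ) - (1 + t i) / 2 * ((y + 1 : ℕ) : ℝ)) ^ 2)
        = 1 / 3 * EE t i N (fun x y => h (y + 1) * (x - (1 + t i) / 2 * y) ^ 2)
        + 1 / 3 * ((1 + t i) / 2 * ((1 - t i) / 2)) * EE t i N (fun _ y => h (y + 1)) := by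
      rw [← EE_smul, ← EE_smul, ← EE_smul, ← EE_smul, ← EE_add, ← EE_add]
      congr 1
      funext x y
      push_cast
      ring
    have k2 : EE t i N (fun _ y => h (y + 1) * ((y + 1 : ℕ) : ℝ))
        = EE t i N (fun _ y => h (y + 1) * y) + EE t i N (fun _ y => h (y + 1)) := by
      rw [← EE_add]
      congr 1
      funext x y
      push_cast
      ring
    rw [add_assoc, key, ih (fun y => h (y + 1)), k2]
    ring

lemma EE_risk (t : Fin 3 → ℝ) (i : Fin 3) (M : ℕ) :
    EE t i (M + 1) (fun x y => ((if y = 0 then (0 : ℝ) else 2 * (x : ℝ) / (y : ℝ) - 1) - t i) ^ 2)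
      = (2 / 3) ^ (M + 1) * (t i ^ 2 + (1 - t i ^ 2) * (((M + 1 : ℕ) : ℝ) / 2 *
        ∑ k ∈ Finset.range (M + 1), (M.choose k : ℝ) * (1/2) ^ k / ((k : ℝ) + 1) ^ 2)) := by
  have h1 : (fun x y : ℕ => ((if y = 0 then (0 : ℝ) else 2 * (x : ℝ) / (y : ℝ) - 1) - t i) ^ 2)
      = fun x y : ℕ => (fun _ y : ℕ => if y = 0 then t i ^ 2 else 0) x y +
        (fun x y : ℕ => (fun y : ℕ => 4 / (y : ℝ) ^ 2) y * (x - (1 + t i) / 2 * y) ^ 2) x y := by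
    funext x y
    by_cases hy : y = 0
    · simp [hy]
    · have : (y : ℝ) ≠ 0 := by exact_mod_cast hy
      simp only [hy, if_false]
      field_simp
      ring
  rw [h1, EE_add, EE_var, EE_bin t i (M + 1) (fun y => if y = 0 then t i ^ 2 else 0),
    EE_bin t i (M + 1) (fun y => 4 / (y : ℝ) ^ 2 * y), Finset.sum_range_succ',
    Finset.sum_range_succ' _ (M + 1)]
  have e : ∀ k ∈ Finset.range (M + 1), (((M + 1).choose (k + 1) : ℕ) : ℝ) *
      ((1 / 3) ^ (k + 1) * (2 / 3) ^ (M + 1 - (k + 1)) *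
        (4 / (((k + 1 : ℕ)) : ℝ) ^ 2 * ((k + 1 : ℕ) : ℝ)))
      = 4 * (2 / 3) ^ (M + 1) * (((M + 1 : ℕ) : ℝ) / 2) *
        ((M.choose k : ℝ) * (1/2) ^ k / ((k : ℝ) + 1) ^ 2) := by
    intro k hk
    have hk' : k ≤ M := Nat.lt_succ_iff.mp (Finset.mem_range.mp hk)
    have hc : ((M + 1 : ℕ) : ℝ) * (M.choose k : ℝ) = ((M + 1).choose (k + 1) : ℝ) * ((k : ℝ) + 1) := by
      exact_mod_cast Nat.add_one_mul_choose_eq M k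
    obtain ⟨m, rfl⟩ := Nat.exists_eq_add_of_le hk'
    have hm : k + m + 1 - (k + 1) = m := by omega
    have hk0 : (k : ℝ) + 1 ≠ 0 := by positivity
    have hp : (1 / 3 : ℝ) ^ (k + 1) * (2 / 3) ^ m = (2 / 3) ^ (k + m + 1) * (1 / 2) ^ k / 2 := by
      have : (1 / 3 : ℝ) ^ k = (2 / 3) ^ k * (1 / 2) ^ k := by
        rw [← mul_pow]; norm_num
      rw [pow_succ, this]
      ring
    have hr : 4 * (2 / 3 : ℝ) ^ (k + m + 1) * (((k + m + 1 : ℕ) : ℝ) / 2) *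
        (((k + m).choose k : ℝ) * (1/2) ^ k / ((k : ℝ) + 1) ^ 2)
        = 2 * (2 / 3 : ℝ) ^ (k + m + 1) * (1/2) ^ k / ((k : ℝ) + 1) ^ 2 *
          (((k + m + 1 : ℕ) : ℝ) * ((k + m).choose k : ℝ)) := by ring
    rw [hr, hc, hm, hp, Nat.cast_succ k]
    field_simp
    try ring
  rw [Finset.sum_congr rfl e, ← Finset.mul_sum]
  simp
  ring

/-- Risk of direct inversion from `N` i.i.d. random Pauli parity checks on the Bell
diagonal state with eigenvalues `θ` and Pauli parameters `t`.  Each draw yields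
`(i,j) ∈ {1,2,3}×{0,1}` with probability `(1+(−1)ʲtᵢ)/6`; with `X_{i,j}` the outcome
counts, `Yᵢ = X_{i,0}+X_{i,1}`, and `t̂ᵢ = 0` if `Yᵢ = 0`, `t̂ᵢ = 2X_{i,0}/Yᵢ − 1` else,
the Hilbert–Schmidt risk `(1/4)Σᵢ E[(t̂ᵢ−tᵢ)²]` equals
`(2/3)^N {(1−Σθᵢ²)[(N/2)g(N) − 1] + 3/4}` with
`g(N) = Σ_{k<N} C(N−1,k) 2^{−k}(k+1)^{−2}`. -/
theorem risk_direct_inversion_random_parity_checks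
    (N : ℕ) (hN : 1 ≤ N)
    (θ : Fin 4 → ℝ) (hθ : ∀ i, 0 ≤ θ i) (hsum : ∑ i, θ i = 1)
    (t : Fin 3 → ℝ)
    (ht1 : t 0 = θ 0 - θ 1 + θ 2 - θ 3)
    (ht2 : t 1 = -θ 0 + θ 1 + θ 2 - θ 3)
    (ht3 : t 2 = θ 0 + θ 1 - θ 2 - θ 3)
    (g : ℝ)
    (hg : g = ∑ k ∈ Finset.range N, ((N - 1).choose k : ℝ) * (1/2) ^ k / ((k : ℝ) + 1) ^ 2) :
    (1/4 : ℝ) * ∑ i : Fin 3, ∑ ω : Fin N → Fin 3 × Fin 2,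
        (∏ n, (1 + (-1 : ℝ) ^ (((ω n).2 : ℕ)) * t (ω n).1) / 6) *
          ((if (Finset.univ.filter fun n => (ω n).1 = i).card = 0 then (0 : ℝ)
            else 2 * ((Finset.univ.filter fun n => ω n = (i, 0)).card : ℝ) /
                ((Finset.univ.filter fun n => (ω n).1 = i).card : ℝ) - 1) - t i) ^ 2
      = (2/3 : ℝ) ^ N *
          ((1 - ∑ i : Fin 4, θ i ^ 2) * ((N : ℝ) / 2 * g - 1) + 3/4) := by
  obtain ⟨M, rfl⟩ : ∃ M, N = M + 1 := ⟨N - 1, by omega⟩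
  have key := fun i => EE_risk t i M
  simp only [EE, wt] at key
  simp only [Nat.add_sub_cancel] at hg
  simp only [key]
  rw [← hg]
  simp only [Fin.sum_univ_three, Fin.sum_univ_four] at *
  have h3 : θ 3 = 1 - θ 0 - θ 1 - θ 2 := by linarith
  rw [ht1, ht2, ht3, h3]
  ring
end

section
/- Let N be a positive multiple of 3, m = N/3, and θ ∈ ℝ⁴ with θᵢ ≥ 0 and Σθᵢ = 1, with Pauli parameters t₁ = θ₁−θ₂+θ₃−θ₄, t₂ = −θ₁+θ₂+θ₃−θ₄, t₃ = θ₁+θ₂−θ₃−θ₄. Let X₁, X₂, X₃ be independent with Xᵢ binomially distributed with m trials and success probability (1+tᵢ)/2, and define the adjusted Bayesian mean estimator t̂ᵢ = (2Xᵢ − m)/(m + 2). Then the Hilbert–Schmidt risk (1/4) Σᵢ₌₁³ E[(t̂ᵢ − tᵢ)²] equals [m − 1 + (4 − m) Σᵢ₌₁⁴ θᵢ²] / (m + 2)². Moreover, the average of this risk over the uniform prior on the probability simplex equals (N+3)/(5(m+2)²), which upper-bounds the average Hilbert–Schmidt risk of the Bayesian mean estimator for N ordered Pauli parity checks under the uniform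 prior. -/
open MeasureTheory

/-- Coordinates on the probability simplex: `(θ₁,θ₂,θ₃) ↦ (θ₁,θ₂,θ₃,1−θ₁−θ₂−θ₃)`. -/
def simplexCoord (y : Fin 3 → ℝ) : Fin 4 → ℝ :=
  ![y 0, y 1, y 2, 1 - y 0 - y 1 - y 2]

/-- The coordinate patch of the probability simplex. -/
def simplexSet : Set (Fin 3 → ℝ) :=
  {y | (∀ j, 0 ≤ y j) ∧ y 0 + y 1 + y 2 ≤ 1}

/-- Pauli parameters `t` of the Bell diagonal state with eigenvalues `θ`. -/
def pauliParams (θ : Fin 4 → ℝ) : Fin 3 → ℝ :=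
  ![θ 0 - θ 1 + θ 2 - θ 3, -θ 0 + θ 1 + θ 2 - θ 3, θ 0 + θ 1 - θ 2 - θ 3]

/-- Probability of observing `x i` even-parity outcomes out of `m` Pauli parity checks
in each basis `i` on the Bell diagonal state with eigenvalues `θ`. -/
noncomputable def parityLikelihood (m : ℕ) (x : Fin 3 → Fin (m + 1)) (θ : Fin 4 → ℝ) : ℝ :=
  ∏ i, (m.choose (x i) : ℝ) * ((1 + pauliParams θ i) / 2) ^ (x i : ℕ) *
    ((1 - pauliParams θ i) / 2) ^ (m - (x i : ℕ))

/-- The Bayesian mean estimate of `θᵢ` from the parity-check data `x`, under the uniform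
prior on the (physical) probability simplex. -/
noncomputable def bmeEstimate (m : ℕ) (x : Fin 3 → Fin (m + 1)) (i : Fin 4) : ℝ :=
  (∫ y in simplexSet, simplexCoord y i * parityLikelihood m x (simplexCoord y)) /
    (∫ y in simplexSet, parityLikelihood m x (simplexCoord y))

lemma aux_moment (m : ℕ) (t : ℝ) :
    (∑ x ∈ Finset.range (m + 1),
        ((m.choose x : ℝ) * ((1 + t) / 2) ^ x * ((1 - t) / 2) ^ (m - x)) *
          ((2 * (x : ℝ) - m) / ((m : ℝ) + 2) - t) ^ 2)
      = ((m : ℝ) * (1 - t ^ 2) + 4 * t ^ 2) / ((m : ℝ) + 2) ^ 2 := by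
  have hm2 : (m : ℝ) + 2 ≠ 0 := by positivity
  have hq : 1 - (1 + t) / 2 = (1 - t) / 2 := by ring
  have h0 := congrArg (Polynomial.eval ((1 + t) / 2)) (bernsteinPolynomial.sum ℝ m)
  have h1 := congrArg (Polynomial.eval ((1 + t) / 2)) (bernsteinPolynomial.sum_smul ℝ m)
  have h2 := congrArg (Polynomial.eval ((1 + t) / 2)) (bernsteinPolynomial.variance ℝ m)
  simp only [bernsteinPolynomial, Polynomial.eval_finset_sum, Polynomial.eval_mul,
    Polynomial.eval_pow, Polynomial.eval_sub, Polynomial.eval_X, Polynomial.eval_one,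
    Polynomial.eval_natCast, Polynomial.eval_smul, nsmul_eq_mul, hq] at h0 h1 h2
  have key : ∀ x ∈ Finset.range (m + 1),
      ((m.choose x : ℝ) * ((1 + t) / 2) ^ x * ((1 - t) / 2) ^ (m - x)) *
          ((2 * (x : ℝ) - m) / ((m : ℝ) + 2) - t) ^ 2
      = (4 / ((m : ℝ) + 2) ^ 2) * (((m : ℝ) * ((1 + t) / 2) - x) ^ 2 *
          ((m.choose x : ℝ) * ((1 + t) / 2) ^ x * ((1 - t) / 2) ^ (m - x)))
        - (8 * t / ((m : ℝ) + 2) ^ 2) * ((x : ℝ) *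
          ((m.choose x : ℝ) * ((1 + t) / 2) ^ x * ((1 - t) / 2) ^ (m - x)))
        + ((4 * t ^ 2 + 8 * t * (m * ((1 + t) / 2))) / ((m : ℝ) + 2) ^ 2) *
          ((m.choose x : ℝ) * ((1 + t) / 2) ^ x * ((1 - t) / 2) ^ (m - x)) := by
    intro x _
    generalize ((m.choose x : ℝ) * ((1 + t) / 2) ^ x * ((1 - t) / 2) ^ (m - x)) = w
    field_simp
    ring
  rw [Finset.sum_congr rfl key, Finset.sum_add_distrib, Finset.sum_sub_distrib,
    ← Finset.mul_sum, ← Finset.mul_sum, ← Finset.mul_sum, h0, h1, h2]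
  field_simp
  ring

lemma aux_sum (m : ℕ) (t : ℝ) :
    (∑ x ∈ Finset.range (m + 1),
        ((m.choose x : ℝ) * ((1 + t) / 2) ^ x * ((1 - t) / 2) ^ (m - x))) = 1 := by
  have hq : 1 - (1 + t) / 2 = (1 - t) / 2 := by ring
  have h0 := congrArg (Polynomial.eval ((1 + t) / 2)) (bernsteinPolynomial.sum ℝ m)
  simpa only [bernsteinPolynomial, Polynomial.eval_finset_sum, Polynomial.eval_mul,
    Polynomial.eval_pow, Polynomial.eval_sub, Polynomial.eval_X, Polynomial.eval_one,
    Polynomial.eval_natCast, Polynomial.eval_smul, nsmul_eq_mul, hq] using h0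

lemma aux_partA (m : ℕ) (θ : Fin 4 → ℝ) (hsum : ∑ i, θ i = 1)
    (t : Fin 3 → ℝ)
    (ht1 : t 0 = θ 0 - θ 1 + θ 2 - θ 3)
    (ht2 : t 1 = -θ 0 + θ 1 + θ 2 - θ 3)
    (ht3 : t 2 = θ 0 + θ 1 - θ 2 - θ 3) :
    (1/4 : ℝ) * ∑ i : Fin 3, ∑ x ∈ Finset.range (m + 1),
        ((m.choose x : ℝ) * ((1 + t i) / 2) ^ x * ((1 - t i) / 2) ^ (m - x)) *
          ((2 * (x : ℝ) - m) / ((m : ℝ) + 2) - t i) ^ 2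
      = ((m : ℝ) - 1 + (4 - (m : ℝ)) * ∑ i, θ i ^ 2) / ((m : ℝ) + 2) ^ 2 := by
  have hm2 : (m : ℝ) + 2 ≠ 0 := by positivity
  simp only [aux_moment]
  rw [Fin.sum_univ_three, Fin.sum_univ_four, ht1, ht2, ht3]
  rw [Fin.sum_univ_four] at hsum
  have h3 : θ 3 = 1 - θ 0 - θ 1 - θ 2 := by linarith
  rw [h3]
  field_simp
  ring

lemma aux_prod {n : ℕ} (w g : Fin 3 → Fin n → ℝ) (hw : ∀ i, ∑ k, w i k = 1) :
    ∑ x : Fin 3 → Fin n, (∏ i, w i (x i)) * ∑ j, g j (x j) = ∑ j, ∑ k, w j k * g j k := by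
  simp only [Finset.mul_sum]
  rw [Finset.sum_comm]
  refine Finset.sum_congr rfl fun j _ => ?_
  have h := Finset.prod_univ_sum (fun _ : Fin 3 => (Finset.univ : Finset (Fin n)))
    (fun i k => w i k * (if i = j then g j k else 1))
  rw [Fintype.piFinset_univ] at h
  have e1 : ∀ x : Fin 3 → Fin n, (∏ i, w i (x i)) * g j (x j)
      = ∏ i, (w i (x i) * (if i = j then g j (x i) else 1)) := by
    intro x
    rw [Finset.prod_mul_distrib, Finset.prod_ite_eq' ]
    simp
  rw [Finset.sum_congr rfl fun x _ => e1 x, ← h, Finset.prod_eq_single j]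
  · simp
  · intro b _ hb
    simp [hb, hw]
  · simp

lemma simplexSet_compact : IsCompact simplexSet := by
  apply IsCompact.of_isClosed_subset (isCompact_Icc (a := (0 : Fin 3 → ℝ)) (b := 1))
  · have : simplexSet = (⋂ j, {y : Fin 3 → ℝ | 0 ≤ y j}) ∩ {y | y 0 + y 1 + y 2 ≤ 1} := by
      ext y; simp [simplexSet]
    rw [this]
    refine IsClosed.inter (isClosed_iInter fun j => ?_) ?_
    · exact isClosed_le (by fun_prop) (by fun_prop)
    · exact isClosed_le (by fun_prop) (by fun_prop)
  · rintro y ⟨h0, h1⟩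
    refine ⟨fun j => h0 j, fun j => ?_⟩
    have a := h0 0; have b := h0 1; have c := h0 2
    fin_cases j <;> simp <;> linarith

lemma simplexCoord_cont : Continuous simplexCoord := by
  unfold simplexCoord
  refine continuous_pi fun i => ?_
  fin_cases i <;> simp <;> fun_prop

lemma pauliParams_cont : Continuous pauliParams := by
  unfold pauliParams
  refine continuous_pi fun i => ?_
  fin_cases i <;> simp <;> fun_prop

lemma lik_cont (m : ℕ) (x : Fin 3 → Fin (m + 1)) :
    Continuous fun y => parityLikelihood m x (simplexCoord y) := by
  unfold parityLikelihood
  have h : ∀ i, Continuous fun y => pauliParams (simplexCoord y) i := fun i =>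
    (continuous_apply i).comp (pauliParams_cont.comp simplexCoord_cont)
  refine continuous_finset_prod _ fun i _ => ?_
  have := h i
  fun_prop

lemma coord_cont (i : Fin 4) : Continuous fun y => simplexCoord y i :=
  (continuous_apply i).comp simplexCoord_cont

lemma cont_int {f : (Fin 3 → ℝ) → ℝ} (hf : Continuous f) : IntegrableOn f simplexSet :=
  hf.continuousOn.integrableOn_compact simplexSet_compact

lemma coord_bd {y : Fin 3 → ℝ} (hy : y ∈ simplexSet) (i : Fin 4) :
    0 ≤ simplexCoord y i ∧ simplexCoord y i ≤ 1 := by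
  obtain ⟨h0, h1⟩ := hy
  have a := h0 0; have b := h0 1; have c := h0 2
  fin_cases i <;> simp [simplexCoord] <;> constructor <;> linarith

lemma lik_nonneg (m : ℕ) (x : Fin 3 → Fin (m + 1)) {y : Fin 3 → ℝ} (hy : y ∈ simplexSet) :
    0 ≤ parityLikelihood m x (simplexCoord y) := by
  have hb : ∀ i, 0 ≤ 1 + pauliParams (simplexCoord y) i ∧
      0 ≤ 1 - pauliParams (simplexCoord y) i := by
    obtain ⟨h0, h1⟩ := hy
    have a := h0 0; have b := h0 1; have c := h0 2
    intro i
    fin_cases i <;> simp [pauliParams, simplexCoord] <;> constructor <;> linarith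
  unfold parityLikelihood
  refine Finset.prod_nonneg fun i _ => ?_
  have h1 := (hb i).1
  have h2 := (hb i).2
  positivity

lemma poly_int (u A B C D E : ℝ) :
    ∫ x in (0:ℝ)..u, (A + B * x + C * x ^ 2 + D * x ^ 3 + E * x ^ 4)
      = A * u + B * u ^ 2 / 2 + C * u ^ 3 / 3 + D * u ^ 4 / 4 + E * u ^ 5 / 5 := by
  have : ∀ x ∈ Set.uIcc 0 u, HasDerivAt (fun x : ℝ =>
      A * x + B / 2 * x ^ 2 + C / 3 * x ^ 3 + D / 4 * x ^ 4 + E / 5 * x ^ 5)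
      (A + B * x + C * x ^ 2 + D * x ^ 3 + E * x ^ 4) x := by
    intro x _
    have h := (((((hasDerivAt_id x).const_mul A).add ((hasDerivAt_pow 2 x).const_mul (B / 2))).add
      ((hasDerivAt_pow 3 x).const_mul (C / 3))).add
      ((hasDerivAt_pow 4 x).const_mul (D / 4))).add ((hasDerivAt_pow 5 x).const_mul (E / 5))
    refine h.congr_deriv ?_
    norm_num
    ring
  rw [intervalIntegral.integral_eq_sub_of_hasDerivAt this
    ((by fun_prop : Continuous _).intervalIntegrable _ _)]
  ring

lemma ind_int (f : ℝ → ℝ) (u : ℝ) (hu : 0 ≤ u) :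
    ∫ x, (Set.Icc 0 u).indicator f x = ∫ x in (0:ℝ)..u, f x := by
  rw [integral_indicator measurableSet_Icc, integral_Icc_eq_integral_Ioc,
    intervalIntegral.integral_of_le hu]

lemma simplex_iter (f : (Fin 3 → ℝ) → ℝ) (hf : Continuous f) :
    ∫ y in simplexSet, f y
      = ∫ a, ∫ b, ∫ c, simplexSet.indicator f ![a, b, c] := by
  have hint : Integrable (simplexSet.indicator f) :=
    (integrable_indicator_iff simplexSet_compact.measurableSet).2 (cont_int hf)
  rw [← integral_indicator simplexSet_compact.measurableSet]
  have e1 := (volume_preserving_piFinSuccAbove (fun _ : Fin 3 => ℝ) 0).symm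
  have e2 := (MeasurePreserving.id (volume : Measure ℝ)).prod
    (volume_preserving_finTwoArrow ℝ).symm
  have e3 := e1.comp e2
  have hfun : ∀ p : ℝ × ℝ × ℝ,
      ((MeasurableEquiv.piFinSuccAbove (fun _ : Fin 3 => ℝ) 0).symm ∘
        Prod.map id (MeasurableEquiv.finTwoArrow (α := ℝ)).symm) p = ![p.1, p.2.1, p.2.2] := by
    intro p
    ext i
    fin_cases i <;> rfl
  have hemb : MeasurableEmbedding ((MeasurableEquiv.piFinSuccAbove (fun _ : Fin 3 => ℝ) 0).symm ∘
        Prod.map id (MeasurableEquiv.finTwoArrow (α := ℝ)).symm) :=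
    (MeasurableEquiv.measurableEmbedding _).comp
      ((MeasurableEquiv.refl ℝ).prodCongr (MeasurableEquiv.finTwoArrow (α := ℝ)).symm).measurableEmbedding
  have hi := (e3.integrable_comp_emb hemb).2 hint
  have he := e3.integral_comp hemb (simplexSet.indicator f)
  rw [← he]
  simp only [Function.comp_def] at hi
  simp only [Function.comp_def] at hfun
  simp only [Function.comp_def]
  simp only [hfun] at hi ⊢
  have hi' : Integrable (fun p : ℝ × ℝ × ℝ => simplexSet.indicator f ![p.1, p.2.1, p.2.2])
    ((volume : Measure ℝ).prod ((volume : Measure ℝ).prod (volume : Measure ℝ))) := hi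
  change ∫ p, _ ∂((volume : Measure ℝ).prod ((volume : Measure ℝ).prod (volume : Measure ℝ))) = _
  rw [integral_prod _ hi']
  refine integral_congr_ae ?_
  filter_upwards [hi'.prod_right_ae] with a ha
  rw [integral_prod _ ha]

lemma simplex_poly (c0 c1 : ℝ) :
    ∫ y in simplexSet, (c0 + c1 * ∑ i : Fin 4, simplexCoord y i ^ 2) = c0 / 6 + c1 / 15 := by
  have hc : Continuous fun y => (c0 + c1 * ∑ i : Fin 4, simplexCoord y i ^ 2) := by
    have := coord_cont
    fun_prop
  rw [simplex_iter _ hc]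
  have s1 : ∀ a b : ℝ, ∫ c, simplexSet.indicator
      (fun y => (c0 + c1 * ∑ i : Fin 4, simplexCoord y i ^ 2)) ![a, b, c]
      = if 0 ≤ a ∧ 0 ≤ b ∧ a + b ≤ 1 then
        c0 * (1 - a - b) + c1 * ((a ^ 2 + b ^ 2) * (1 - a - b) + 2 * (1 - a - b) ^ 3 / 3)
        else 0 := by
    intro a b
    split_ifs with h
    · obtain ⟨ha, hb, hab⟩ := h
      have : ∀ c, simplexSet.indicator
          (fun y => (c0 + c1 * ∑ i : Fin 4, simplexCoord y i ^ 2)) ![a, b, c]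
          = (Set.Icc 0 (1 - a - b)).indicator (fun c =>
            (c0 + c1 * (a ^ 2 + b ^ 2 + (1 - a - b) ^ 2)) + (-2 * c1 * (1 - a - b)) * c
              + (2 * c1) * c ^ 2 + 0 * c ^ 3 + 0 * c ^ 4) c := by
        intro c
        have hiff : (![a, b, c] ∈ simplexSet) ↔ c ∈ Set.Icc 0 (1 - a - b) := by
          simp only [simplexSet, Set.mem_setOf_eq, Fin.forall_fin_succ, Set.mem_Icc]
          simp
          constructor
          · rintro ⟨⟨_, _, h3⟩, h4⟩; exact ⟨h3, by linarith⟩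
          · rintro ⟨h3, h4⟩; exact ⟨⟨ha, hb, h3⟩, by linarith⟩
        by_cases hcm : c ∈ Set.Icc 0 (1 - a - b)
        · rw [Set.indicator_of_mem (hiff.2 hcm), Set.indicator_of_mem hcm]
          simp [Fin.sum_univ_four, simplexCoord]
          ring
        · rw [Set.indicator_of_notMem (fun h => hcm (hiff.1 h)), Set.indicator_of_notMem hcm]
      simp only [this]
      rw [ind_int _ _ (by linarith), poly_int]
      ring
    · have : ∀ c, simplexSet.indicator
          (fun y => (c0 + c1 * ∑ i : Fin 4, simplexCoord y i ^ 2)) ![a, b, c] = 0 := by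
        intro c
        refine Set.indicator_of_notMem (fun hm => h ?_) _
        obtain ⟨h0, h1⟩ := hm
        have p := h0 0; have q := h0 1; have r := h0 2
        simp at p q r h1
        exact ⟨p, q, by linarith⟩
      simp [this]
  simp only [s1]
  have s2 : ∀ a : ℝ, (∫ b, if 0 ≤ a ∧ 0 ≤ b ∧ a + b ≤ 1 then
        c0 * (1 - a - b) + c1 * ((a ^ 2 + b ^ 2) * (1 - a - b) + 2 * (1 - a - b) ^ 3 / 3)
        else 0) = (Set.Icc 0 1).indicator (fun a =>
        (c0 / 2 + c1 / 4) + (-c0 - c1) * a + (c0 / 2 + c1 / 2 + 3 * c1 / 2) * a ^ 2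
          + (-c1 - c1) * a ^ 3 + (c1 / 2 + c1 / 4) * a ^ 4) a := by
    intro a
    by_cases ha : a ∈ Set.Icc (0:ℝ) 1
    · rw [Set.indicator_of_mem ha]
      have : ∀ b, (if 0 ≤ a ∧ 0 ≤ b ∧ a + b ≤ 1 then
        c0 * (1 - a - b) + c1 * ((a ^ 2 + b ^ 2) * (1 - a - b) + 2 * (1 - a - b) ^ 3 / 3)
        else 0) = (Set.Icc 0 (1 - a)).indicator (fun b =>
          (c0 * (1 - a) + c1 * (a ^ 2 * (1 - a) + 2 * (1 - a) ^ 3 / 3))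
          + (-c0 + c1 * (-a ^ 2 - 2 * (1 - a) ^ 2)) * b
          + (c1 * ((1 - a) + 2 * (1 - a))) * b ^ 2 + (c1 * (-1 - 2 / 3)) * b ^ 3
          + 0 * b ^ 4) b := by
        intro b
        rw [Set.indicator_apply]
        have : (0 ≤ a ∧ 0 ≤ b ∧ a + b ≤ 1) ↔ b ∈ Set.Icc 0 (1 - a) := by
          constructor
          · rintro ⟨_, h, h'⟩; exact ⟨h, by linarith⟩
          · rintro ⟨h, h'⟩; exact ⟨ha.1, h, by linarith⟩
        simp only [this]
        split_ifs
        · ring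
        · rfl
      simp only [this]
      rw [ind_int _ _ (by linarith [ha.2]), poly_int]
      ring
    · rw [Set.indicator_of_notMem ha]
      have : ∀ b, ¬ (0 ≤ a ∧ 0 ≤ b ∧ a + b ≤ 1) := by
        rintro b ⟨h, h', h''⟩; exact ha ⟨h, by linarith⟩
      simp [this]
  simp only [s2]
  rw [ind_int _ _ zero_le_one, poly_int]
  ring

lemma risk_split (m : ℕ) (a : (Fin 3 → Fin (m + 1)) → Fin 4 → ℝ) :
    ∫ y in simplexSet, 6 * ∑ x : Fin 3 → Fin (m + 1), parityLikelihood m x (simplexCoord y) *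
            ∑ i : Fin 4, (a x i - simplexCoord y i) ^ 2
      = 6 * ∑ x : Fin 3 → Fin (m + 1), ∑ i : Fin 4, ∫ y in simplexSet,
          parityLikelihood m x (simplexCoord y) * (a x i - simplexCoord y i) ^ 2 := by
  have hI : ∀ x i, IntegrableOn (fun y => parityLikelihood m x (simplexCoord y) *
      (a x i - simplexCoord y i) ^ 2) simplexSet := fun x i =>
    cont_int ((lik_cont m x).mul ((continuous_const.sub (coord_cont i)).pow 2))
  rw [integral_const_mul]
  congr 1
  simp only [Finset.mul_sum]
  rw [integral_finset_sum _ fun x _ => integrable_finset_sum _ fun i _ => hI x i]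
  refine Finset.sum_congr rfl fun x _ => ?_
  rw [integral_finset_sum _ fun i _ => hI x i]

lemma bme_opt (m : ℕ) (x : Fin 3 → Fin (m + 1)) (i : Fin 4) (a : ℝ) :
    ∫ y in simplexSet, parityLikelihood m x (simplexCoord y) *
        (bmeEstimate m x i - simplexCoord y i) ^ 2
      ≤ ∫ y in simplexSet, parityLikelihood m x (simplexCoord y) *
        (a - simplexCoord y i) ^ 2 := by
  have hms := simplexSet_compact.measurableSet
  have iL := cont_int (lik_cont m x)
  have iM : IntegrableOn (fun y => simplexCoord y i * parityLikelihood m x (simplexCoord y))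
      simplexSet := cont_int ((coord_cont i).mul (lik_cont m x))
  have iV : IntegrableOn (fun y => simplexCoord y i ^ 2 * parityLikelihood m x (simplexCoord y))
      simplexSet := cont_int (((coord_cont i).pow 2).mul (lik_cont m x))
  have hexp : ∀ b : ℝ, ∫ y in simplexSet, parityLikelihood m x (simplexCoord y) *
        (b - simplexCoord y i) ^ 2
      = b ^ 2 * (∫ y in simplexSet, parityLikelihood m x (simplexCoord y))
        - 2 * b * (∫ y in simplexSet, simplexCoord y i * parityLikelihood m x (simplexCoord y))
        + ∫ y in simplexSet, simplexCoord y i ^ 2 * parityLikelihood m x (simplexCoord y) := by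
    intro b
    have iS : IntegrableOn (fun y => b ^ 2 * parityLikelihood m x (simplexCoord y) -
        2 * b * (simplexCoord y i * parityLikelihood m x (simplexCoord y))) simplexSet :=
      (iL.const_mul _).sub (iM.const_mul _)
    rw [← integral_const_mul, ← integral_const_mul,
      ← integral_sub (iL.const_mul _) (iM.const_mul _),
      ← integral_add iS iV]
    refine integral_congr_ae (Filter.Eventually.of_forall fun y => ?_)
    ring
  rw [hexp, hexp]
  have hD : 0 ≤ ∫ y in simplexSet, parityLikelihood m x (simplexCoord y) :=
    setIntegral_nonneg hms fun y hy => lik_nonneg m x hy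
  have hM0 : 0 ≤ ∫ y in simplexSet, simplexCoord y i * parityLikelihood m x (simplexCoord y) :=
    setIntegral_nonneg hms fun y hy => mul_nonneg (coord_bd hy i).1 (lik_nonneg m x hy)
  have hM1 : (∫ y in simplexSet, simplexCoord y i * parityLikelihood m x (simplexCoord y))
      ≤ ∫ y in simplexSet, parityLikelihood m x (simplexCoord y) :=
    setIntegral_mono_on iM iL hms fun y hy =>
      mul_le_of_le_one_left (lik_nonneg m x hy) (coord_bd hy i).2
  unfold bmeEstimate
  generalize (∫ y in simplexSet, parityLikelihood m x (simplexCoord y)) = D at *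
  generalize (∫ y in simplexSet, simplexCoord y i * parityLikelihood m x (simplexCoord y)) = M at *
  rcases hD.eq_or_lt with h | h
  · subst h
    have : M = 0 := le_antisymm hM1 hM0
    simp [this]
  · have : a ^ 2 * D - 2 * a * M - ((M / D) ^ 2 * D - 2 * (M / D) * M) = (a - M / D) ^ 2 * D := by
      field_simp
      ring
    have := mul_nonneg (sq_nonneg (a - M / D)) hD
    linarith

/-- Adjusted estimator of the Pauli parameters. -/
noncomputable def tHat (m : ℕ) (x : Fin 3 → Fin (m + 1)) (j : Fin 3) : ℝ :=
  (2 * ((x j : ℕ) : ℝ) - m) / ((m : ℝ) + 2)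

/-- Adjusted estimator of the eigenvalues. -/
noncomputable def thetaHat (m : ℕ) (x : Fin 3 → Fin (m + 1)) : Fin 4 → ℝ :=
  ![(1 + tHat m x 0 - tHat m x 1 + tHat m x 2) / 4, (1 - tHat m x 0 + tHat m x 1 + tHat m x 2) / 4,
    (1 + tHat m x 0 + tHat m x 1 - tHat m x 2) / 4, (1 - tHat m x 0 - tHat m x 1 - tHat m x 2) / 4]

lemma adj_risk (m : ℕ) (y : Fin 3 → ℝ) :
    ∑ x : Fin 3 → Fin (m + 1), parityLikelihood m x (simplexCoord y) *
            ∑ i : Fin 4, (thetaHat m x i - simplexCoord y i) ^ 2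
      = ((m : ℝ) - 1 + (4 - (m : ℝ)) * ∑ i : Fin 4, simplexCoord y i ^ 2) /
            ((m : ℝ) + 2) ^ 2 := by
  have hs : ∑ i, simplexCoord y i = 1 := by
    simp [Fin.sum_univ_four, simplexCoord]
  rw [← aux_partA m (simplexCoord y) hs (pauliParams (simplexCoord y)) rfl rfl rfl]
  have e : ∀ x : Fin 3 → Fin (m + 1), ∑ i : Fin 4, (thetaHat m x i - simplexCoord y i) ^ 2
      = (1 / 4) * ∑ j : Fin 3, (tHat m x j - pauliParams (simplexCoord y) j) ^ 2 := by
    intro x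
    simp [Fin.sum_univ_four, Fin.sum_univ_three, thetaHat, simplexCoord, pauliParams]
    ring
  simp only [e, mul_left_comm _ (1 / 4 : ℝ), ← Finset.mul_sum]
  congr 1
  have h := aux_prod (n := m + 1) (fun i k => (m.choose k : ℝ) *
      ((1 + pauliParams (simplexCoord y) i) / 2) ^ (k : ℕ) *
      ((1 - pauliParams (simplexCoord y) i) / 2) ^ (m - (k : ℕ)))
    (fun j k => ((2 * ((k : ℕ) : ℝ) - m) / ((m : ℝ) + 2) - pauliParams (simplexCoord y) j) ^ 2)
    (by
      intro i
      have h := aux_sum m (pauliParams (simplexCoord y) i)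
      rw [Finset.sum_range] at h
      exact h)
  simp only [Finset.sum_range]
  exact h

lemma aux_partB (m : ℕ) : (∫ y in simplexSet,
          6 * (((m : ℝ) - 1 + (4 - (m : ℝ)) * ∑ i : Fin 4, simplexCoord y i ^ 2) /
            ((m : ℝ) + 2) ^ 2))
        = (((3 * m : ℕ) : ℝ) + 3) / (5 * ((m : ℝ) + 2) ^ 2) := by
  have hm2 : (m : ℝ) + 2 ≠ 0 := by positivity
  have e : ∀ y : Fin 3 → ℝ, 6 * (((m : ℝ) - 1 + (4 - (m : ℝ)) * ∑ i : Fin 4, simplexCoord y i ^ 2) /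
            ((m : ℝ) + 2) ^ 2) = 6 * ((m : ℝ) - 1) / ((m : ℝ) + 2) ^ 2 +
            (6 * (4 - (m : ℝ)) / ((m : ℝ) + 2) ^ 2) * ∑ i : Fin 4, simplexCoord y i ^ 2 := by
    intro y
    ring
  simp only [e]
  rw [simplex_poly]
  push_cast
  field_simp
  ring

/-- For `N = 3m` ordered Pauli parity checks with `Xᵢ ~ Bin(m, (1+tᵢ)/2)` and the adjusted
Bayesian mean estimator `t̂ᵢ = (2Xᵢ−m)/(m+2)`:
(a) the Hilbert–Schmidt risk `(1/4)Σᵢ E[(t̂ᵢ−tᵢ)²]` equals `[m−1+(4−m)Σθᵢ²]/(m+2)²`;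
(b) its average over the uniform prior on the simplex equals `(N+3)/(5(m+2)²)`;
(c) this value upper-bounds the average Hilbert–Schmidt risk of the (true) Bayesian mean
estimator for `N` ordered Pauli parity checks under the uniform prior. -/
theorem risk_adjusted_bme_ordered_parity_checks
    (N m : ℕ) (hm : 1 ≤ m) (hN : N = 3 * m)
    (θ : Fin 4 → ℝ) (hθ : ∀ i, 0 ≤ θ i) (hsum : ∑ i, θ i = 1)
    (t : Fin 3 → ℝ)
    (ht1 : t 0 = θ 0 - θ 1 + θ 2 - θ 3)
    (ht2 : t 1 = -θ 0 + θ 1 + θ 2 - θ 3)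
    (ht3 : t 2 = θ 0 + θ 1 - θ 2 - θ 3) :
    ((1/4 : ℝ) * ∑ i : Fin 3, ∑ x ∈ Finset.range (m + 1),
        ((m.choose x : ℝ) * ((1 + t i) / 2) ^ x * ((1 - t i) / 2) ^ (m - x)) *
          ((2 * (x : ℝ) - m) / ((m : ℝ) + 2) - t i) ^ 2
      = ((m : ℝ) - 1 + (4 - (m : ℝ)) * ∑ i, θ i ^ 2) / ((m : ℝ) + 2) ^ 2)
    ∧ (∫ y in simplexSet,
          6 * (((m : ℝ) - 1 + (4 - (m : ℝ)) * ∑ i : Fin 4, simplexCoord y i ^ 2) /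
            ((m : ℝ) + 2) ^ 2)
        = ((N : ℝ) + 3) / (5 * ((m : ℝ) + 2) ^ 2))
    ∧ (∫ y in simplexSet,
          6 * ∑ x : Fin 3 → Fin (m + 1), parityLikelihood m x (simplexCoord y) *
            ∑ i : Fin 4, (bmeEstimate m x i - simplexCoord y i) ^ 2
        ≤ ((N : ℝ) + 3) / (5 * ((m : ℝ) + 2) ^ 2)) := by
  subst hN
  refine ⟨aux_partA m θ hsum t ht1 ht2 ht3, aux_partB m, ?_⟩
  rw [← aux_partB m]
  simp only [← adj_risk]
  rw [risk_split, risk_split]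
  refine mul_le_mul_of_nonneg_left ?_ (by norm_num)
  exact Finset.sum_le_sum fun x _ => Finset.sum_le_sum fun i _ => bme_opt m x i _
end
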